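/- arXiv:1806.00009 — 2 statements merged into one kernel-verified Lean document; each statement's English description precedes it below -/
import Mathlib

section
/- For every odd n, there is a bijection between the set of symmetric latin squares of order n and the set of symmetric latin squares f of order n+1 satisfying f(x,x) = n+1 for all x. Explicitly, given such an f of order n+1, the function g on {1,...,n}² defined by g(x,x) = f(x, n+1) and g(x,y) = f(x,y) for x ≠ y is a symmetric latin square of order n; and this map is a bijection. -/
/-- A latin square of order `n`: a binary operation invertible in each argument. -/
def IsLatin {n : ℕ} (f : Fin n → Fin n → Fin n) : Prop :=
  (∀ y, Function.Bijective fun x => f x y) ∧ (∀ x, Function.Bijective (f x))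

def IsSymmetric {n : ℕ} (f : Fin n → Fin n → Fin n) : Prop := ∀ x y, f x y = f y x

/-!
Fix `x` and exchange, in row `x` of `f`, the entry `n + 1` on the diagonal with the entry in the
last column: restricted to `{1, ..., n}` this is row `x` of `g`. So `f` is recovered from `g` by
adding a row that repeats the diagonal of `g`, appending `n + 1` to every row, and exchanging back.
The result is a latin square exactly when the diagonal of `g` has no repeated entry. This is where
odd order enters: a symbol occupies the cells of a symmetric latin square according to an
involution of the rows, and an involution of an odd set has a fixed point.
-/

open Equiv (swap)

section OddOrder

variable {α β : Type*}

theorem exists_apply_eq_of_involutive_of_odd_card (hα : Odd (Nat.card α)) {σ : α → α}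
    (hσ : Function.Involutive σ) : ∃ x, σ x = x := by
  have : Finite α := Nat.finite_of_card_ne_zero hα.pos.ne'
  have := Fintype.ofFinite α
  have hsq : hσ.toPerm ^ 2 ^ 1 = 1 := Equiv.ext fun x => by simp [pow_two, hσ x]
  exact Equiv.Perm.exists_fixed_point_of_prime
    (Nat.card_eq_fintype_card (α := α) ▸ hα.not_two_dvd_nat) hsq

theorem surjective_diag_of_odd_card (hα : Odd (Nat.card α)) {g : α → α → β}
    (hsymm : ∀ x y, g x y = g y x) (hrow : ∀ x, Function.Bijective (g x)) :
    Function.Surjective fun x => g x x := by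
  intro c
  choose σ hσ using fun x => (hrow x).surjective c
  have hinv : Function.Involutive σ := fun x => (hrow (σ x)).injective <|
    calc g (σ x) (σ (σ x)) = c := hσ (σ x)
      _ = g x (σ x) := (hσ x).symm
      _ = g (σ x) x := hsymm x (σ x)
  obtain ⟨x, hx⟩ := exists_apply_eq_of_involutive_of_odd_card hα hinv
  exact ⟨x, by simpa only [hx] using hσ x⟩

end OddOrder

section Prolongation

variable {n : ℕ}

namespace IsSymmetric

theorem isLatin {f : Fin n → Fin n → Fin n} (hs : IsSymmetric f)
    (hrow : ∀ x, Function.Injective (f x)) : IsLatin f := by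
  have hbij : ∀ x, Function.Bijective (f x) := fun x => (hrow x).bijective_of_finite
  refine ⟨fun y => ?_, hbij⟩
  simpa only [hs _ y] using hbij y

theorem injective_diag {g : Fin n → Fin n → Fin n} (hs : IsSymmetric g) (hl : IsLatin g)
    (hn : Odd n) : Function.Injective fun x => g x x :=
  Finite.injective_iff_surjective.mpr <|
    surjective_diag_of_odd_card (by rwa [Nat.card_fin]) hs hl.2

end IsSymmetric

theorem IsLatin.eq_of_apply_eq_last {f : Fin (n + 1) → Fin (n + 1) → Fin (n + 1)}
    (hl : IsLatin f) {x y : Fin (n + 1)} (hd : f x x = Fin.last n) (h : f x y = Fin.last n) :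
    x = y :=
  (hl.2 x).injective (hd.trans h.symm)

/-- The prolongation of a square along its main diagonal: the diagonal entries move to a new last
row and a new last column, and the new symbol `Fin.last n` takes their place. In row `x` this is
the exchange of columns `x` and `Fin.last n` after appending `Fin.last n` to the row; the last row
is the diagonal of `g`, on which the exchange is trivial. -/
def prolong (g : Fin n → Fin n → Fin n) (x y : Fin (n + 1)) : Fin (n + 1) :=
  let row : Fin n → Fin n := Fin.lastCases (fun j => g j j) g x
  Fin.snoc (α := fun _ => Fin (n + 1)) (Fin.castSucc ∘ row) (Fin.last n) (swap x (Fin.last n) y)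

/-- The inverse of `prolong`: the last row is deleted, and the last column, which becomes the
diagonal, is deleted after its exchange with the diagonal. The hypothesis ensures that no remaining
entry is `Fin.last n`. -/
def contract (f : Fin (n + 1) → Fin (n + 1) → Fin (n + 1))
    (hf : ∀ {x y}, f x y = Fin.last n → x = y) (x y : Fin n) : Fin n :=
  (f x.castSucc (swap x.castSucc (Fin.last n) y.castSucc)).castPred fun h =>
    y.castSucc_ne_last <| (swap x.castSucc (Fin.last n)).injective <| by
      rw [← hf h, Equiv.swap_apply_right]

section Prolong

variable (g : Fin n → Fin n → Fin n)

theorem prolong_last_castSucc (j : Fin n) :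
    prolong g (Fin.last n) j.castSucc = (g j j).castSucc := by
  simp [prolong]

theorem prolong_castSucc_swap (i j : Fin n) :
    prolong g i.castSucc (swap i.castSucc (Fin.last n) j.castSucc) = (g i j).castSucc := by
  simp [prolong]

theorem prolong_self (x : Fin (n + 1)) : prolong g x x = Fin.last n := by
  simp [prolong]

theorem prolong_castSucc_last (i : Fin n) :
    prolong g i.castSucc (Fin.last n) = (g i i).castSucc := by
  simpa using prolong_castSucc_swap g i i

theorem prolong_castSucc_castSucc {i j : Fin n} (hij : i ≠ j) :
    prolong g i.castSucc j.castSucc = (g i j).castSucc := by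
  simpa [Equiv.swap_apply_of_ne_of_ne, hij.symm] using prolong_castSucc_swap g i j

variable {g}

theorem eq_of_prolong_eq_last {x y : Fin (n + 1)} (h : prolong g x y = Fin.last n) : x = y := by
  by_contra hxy
  cases x using Fin.lastCases <;> cases y using Fin.lastCases <;>
    simp_all [prolong_last_castSucc, prolong_castSucc_last, prolong_castSucc_castSucc]

theorem IsSymmetric.prolong (hs : IsSymmetric g) : IsSymmetric (prolong g) := by
  intro x y
  obtain rfl | hxy := eq_or_ne x y
  · rfl
  cases x using Fin.lastCases with
  | last =>
    cases y using Fin.lastCases with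
    | last => rfl
    | cast j => rw [prolong_last_castSucc, prolong_castSucc_last]
  | cast i =>
    cases y using Fin.lastCases with
    | last => rw [prolong_last_castSucc, prolong_castSucc_last]
    | cast j =>
      have hij : i ≠ j := fun h => hxy (congrArg Fin.castSucc h)
      rw [prolong_castSucc_castSucc _ hij, prolong_castSucc_castSucc _ hij.symm, hs]

theorem injective_prolong (hrow : ∀ x, Function.Injective (g x))
    (hdiag : Function.Injective fun x => g x x) (x : Fin (n + 1)) :
    Function.Injective (prolong g x) := by
  refine (Fin.snoc_injective_of_injective ((Fin.castSucc_injective n).comp ?_) ?_).comp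
    (swap x (Fin.last n)).injective
  · cases x using Fin.lastCases with
    | last => simpa only [Fin.lastCases_last] using hdiag
    | cast i => simpa only [Fin.lastCases_castSucc] using hrow i
  · rintro ⟨y, hy⟩
    exact Fin.castSucc_ne_last _ hy

end Prolong

section Contract

variable {f : Fin (n + 1) → Fin (n + 1) → Fin (n + 1)}
  (hf : ∀ {x y}, f x y = Fin.last n → x = y)

theorem castSucc_contract (x y : Fin n) :
    (contract f hf x y).castSucc = f x.castSucc (swap x.castSucc (Fin.last n) y.castSucc) :=
  Fin.castSucc_castPred _ _

theorem castSucc_contract_self (x : Fin n) :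
    (contract f hf x x).castSucc = f x.castSucc (Fin.last n) := by
  rw [castSucc_contract, Equiv.swap_apply_left]

theorem castSucc_contract_of_ne {x y : Fin n} (hxy : x ≠ y) :
    (contract f hf x y).castSucc = f x.castSucc y.castSucc := by
  rw [castSucc_contract, Equiv.swap_apply_of_ne_of_ne
    ((Fin.castSucc_injective n).ne hxy.symm) y.castSucc_ne_last]

theorem IsSymmetric.contract (hs : IsSymmetric f) : IsSymmetric (contract f hf) := by
  intro x y
  obtain rfl | hxy := eq_or_ne x y
  · rfl
  · apply Fin.castSucc_injective
    rw [castSucc_contract_of_ne hf hxy, castSucc_contract_of_ne hf hxy.symm, hs]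

theorem injective_contract {x : Fin n} (hrow : Function.Injective (f x.castSucc)) :
    Function.Injective (contract f hf x) := by
  refine .of_comp (f := Fin.castSucc) ?_
  simpa only [Function.comp_def, castSucc_contract] using
    hrow.comp ((swap _ _).injective.comp (Fin.castSucc_injective n))

theorem injective_diag_contract (hcol : Function.Injective fun x => f x (Fin.last n)) :
    Function.Injective fun x => contract f hf x x := by
  refine .of_comp (f := Fin.castSucc) ?_
  simpa only [Function.comp_def, castSucc_contract_self] using
    hcol.comp (Fin.castSucc_injective n)

theorem prolong_contract (hs : IsSymmetric f) (hd : ∀ x, f x x = Fin.last n) :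
    prolong (contract f hf) = f := by
  funext x y
  obtain rfl | hxy := eq_or_ne x y
  · rw [prolong_self, hd]
  cases x using Fin.lastCases with
  | last =>
    cases y using Fin.lastCases with
    | last => exact absurd rfl hxy
    | cast j => rw [prolong_last_castSucc, castSucc_contract_self, hs]
  | cast i =>
    cases y using Fin.lastCases with
    | last => rw [prolong_castSucc_last, castSucc_contract_self]
    | cast j =>
      have hij : i ≠ j := fun h => hxy (congrArg Fin.castSucc h)
      rw [prolong_castSucc_castSucc _ hij, castSucc_contract_of_ne hf hij]

theorem contract_prolong (g : Fin n → Fin n → Fin n) :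
    contract (prolong g) eq_of_prolong_eq_last = g := by
  funext x y
  apply Fin.castSucc_injective
  rw [castSucc_contract, prolong_castSucc_swap]

end Contract

/-- Contraction and prolongation as mutually inverse maps. The squares of order `n` whose
diagonal has no repeated entry are exactly those whose prolongation is again a latin square. -/
def contractEquiv (n : ℕ) :
    {f : Fin (n + 1) → Fin (n + 1) → Fin (n + 1) //
      IsLatin f ∧ IsSymmetric f ∧ ∀ x, f x x = Fin.last n} ≃
    {g : Fin n → Fin n → Fin n //
      (IsLatin g ∧ IsSymmetric g) ∧ Function.Injective fun x => g x x} where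
  toFun := fun ⟨f, hl, hs, hd⟩ =>
    have hf {x y} : f x y = Fin.last n → x = y := hl.eq_of_apply_eq_last (hd x)
    ⟨contract f hf,
      ⟨(hs.contract hf).isLatin fun x => injective_contract hf (hl.2 x.castSucc).injective,
        hs.contract hf⟩,
      injective_diag_contract hf (hl.1 _).injective⟩
  invFun := fun ⟨g, ⟨hl, hs⟩, hdiag⟩ =>
    ⟨prolong g, hs.prolong.isLatin (injective_prolong (fun x => (hl.2 x).injective) hdiag),
      hs.prolong, prolong_self g⟩
  left_inv := fun ⟨_, _, hs, hd⟩ => Subtype.ext (prolong_contract _ hs hd)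
  right_inv := fun ⟨g, ⟨_, _⟩, _⟩ => Subtype.ext (contract_prolong g)

end Prolongation

/-- For odd `n`, the symmetric latin squares `f` of order `n+1` with constant
diagonal `f(x,x) = n+1` are in bijection with the symmetric latin squares of
order `n`, explicitly via `g(x,x) = f(x, n+1)` and `g(x,y) = f(x,y)` for `x ≠ y`. -/
theorem symmetric_latin_square_odd_bijection (n : ℕ) (hn : Odd n) :
    ∃ e : {f : Fin (n + 1) → Fin (n + 1) → Fin (n + 1) //
            IsLatin f ∧ IsSymmetric f ∧ ∀ x, f x x = Fin.last n} ≃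
          {g : Fin n → Fin n → Fin n // IsLatin g ∧ IsSymmetric g},
      ∀ (f : {f : Fin (n + 1) → Fin (n + 1) → Fin (n + 1) //
            IsLatin f ∧ IsSymmetric f ∧ ∀ x, f x x = Fin.last n}) (x y : Fin n),
        ((((e f).1 x y : Fin n) : ℕ) =
          if x = y then ((f.1 x.castSucc (Fin.last n) : Fin (n+1)) : ℕ)
          else ((f.1 x.castSucc y.castSucc : Fin (n+1)) : ℕ)) := by
  have hdiag (g : Fin n → Fin n → Fin n) :
      (IsLatin g ∧ IsSymmetric g) ∧ (Function.Injective fun x => g x x) ↔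
        IsLatin g ∧ IsSymmetric g :=
    and_iff_left_of_imp fun ⟨hl, hs⟩ => hs.injective_diag hl hn
  refine ⟨(contractEquiv n).trans (Equiv.subtypeEquivRight hdiag), ?_⟩
  rintro ⟨f, hl, hs, hd⟩ x y
  have hf {x y} : f x y = Fin.last n → x = y := hl.eq_of_apply_eq_last (hd x)
  split_ifs with hxy
  · subst hxy
    exact congrArg Fin.val (castSucc_contract_self hf x)
  · exact congrArg Fin.val (castSucc_contract_of_ne hf hxy)
end

section
/- Let B be a Steiner triple system of order v on points {1,...,v} and let D be a subspace of GF(3)^v containing the all-one vector, orthogonal to the characteristic vector of every block of B, with dim D = i+1. Let M be an (i+1) × v generator matrix for D whose first row is the all-one vector. Then M has exactly 3^i distinct columns, and each occurs exactly v/3^i times. In particular, 3^i divides v. -/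
/-- A Steiner triple system. -/
def IsSTS {V : Type*} [DecidableEq V] (B : Finset (Finset V)) : Prop :=
  (∀ b ∈ B, b.card = 3) ∧
  ∀ p : Finset V, p.card = 2 → ∃! b, b ∈ B ∧ p ⊆ b

/-!
The columns of `M` are the point evaluations on its row space `D`, and evaluations lie in the
affine hyperplane `{φ | φ 1 = 1}` of the dual space of `D`. Orthogonality says that the evaluations
at the three points of a block sum to zero. So the set of evaluations is closed under
`(φ, ψ) ↦ -φ - ψ`, which over `GF(3)` completes the line through `φ` and `ψ`. It is therefore an
affine subspace; as it spans, it is the whole hyperplane, which has `3 ^ i` elements. Finally,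
multiplication by `z = x * y` in the Steiner quasigroup exchanges the points whose column equals
that of `x` with those whose column equals that of `y`, so all multiplicities agree.
-/

open Module
open scoped Finset

namespace IsSTS

variable {V : Type*} [DecidableEq V] {B : Finset (Finset V)}

theorem existsUnique_insert_mem (hB : IsSTS B) {x y : V} (hxy : x ≠ y) :
    ∃! z, z ∉ ({x, y} : Finset V) ∧ insert z {x, y} ∈ B := by
  obtain ⟨b, ⟨hb, hsub⟩, huniq⟩ := hB.2 {x, y} (Finset.card_pair hxy)
  obtain ⟨z, hz, rfl⟩ : ∃ z ∉ ({x, y} : Finset V), insert z {x, y} = b :=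
    (Finset.covBy_iff_card_sdiff_eq_one.mpr ⟨hsub, by
      rw [Finset.card_sdiff_of_subset hsub, hB.1 b hb, Finset.card_pair hxy]⟩).exists_finset_insert
  refine ⟨z, ⟨hz, hb⟩, fun w ⟨hw, hwB⟩ ↦ ?_⟩
  have hins := huniq _ ⟨hwB, Finset.subset_insert _ _⟩
  exact (Finset.insert_inj hw).mp hins

/-- The product of the Steiner quasigroup of a Steiner triple system: `x * x = x`, and for `x ≠ y`
the product is the third point of the block through `x` and `y`. -/
noncomputable def mul (hB : IsSTS B) (x y : V) : V :=
  if h : x = y then x else (hB.existsUnique_insert_mem h).choose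

theorem mul_self (hB : IsSTS B) (x : V) : hB.mul x x = x :=
  dif_pos rfl

theorem mul_eq_iff (hB : IsSTS B) {x y z : V} (hxy : x ≠ y) :
    hB.mul x y = z ↔ z ∉ ({x, y} : Finset V) ∧ insert z {x, y} ∈ B := by
  have huniq := hB.existsUnique_insert_mem hxy
  rw [mul, dif_neg hxy]
  exact ⟨fun h ↦ h ▸ huniq.choose_spec.1, fun h ↦ huniq.unique huniq.choose_spec.1 h⟩

theorem mul_mul_cancel (hB : IsSTS B) (x y : V) : hB.mul x (hB.mul x y) = y := by
  obtain rfl | hxy := eq_or_ne x y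
  · rw [hB.mul_self, hB.mul_self]
  · obtain ⟨hz, hblock⟩ := (hB.mul_eq_iff hxy).mp rfl
    simp only [Finset.mem_insert, Finset.mem_singleton, not_or] at hz
    refine (hB.mul_eq_iff (Ne.symm hz.1)).mpr ⟨by grind, ?_⟩
    convert hblock using 1
    grind

section ZeroSumLabelling

variable {W : Type*} [AddCommGroup W] [Module (ZMod 3) W] {f : V → W}

theorem apply_mul (hB : IsSTS B) (hf : ∀ b ∈ B, ∑ j ∈ b, f j = 0) (x y : V) :
    f (hB.mul x y) = -f x - f y := by
  obtain rfl | hxy := eq_or_ne x y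
  · rw [hB.mul_self, ← sub_eq_zero, ← ZModModule.char_nsmul_eq_zero 3 (f x)]
    abel
  · obtain ⟨hz, hblock⟩ := (hB.mul_eq_iff hxy).mp rfl
    have hsum := hf _ hblock
    rw [Finset.sum_insert hz, Finset.sum_pair hxy] at hsum
    rw [eq_neg_of_add_eq_zero_left hsum, neg_add']

variable [Fintype V] [DecidableEq W]

theorem card_fiber_eq (hB : IsSTS B) (hf : ∀ b ∈ B, ∑ j ∈ b, f j = 0) (x y : V) :
    #{j | f j = f x} = #{j | f j = f y} := by
  let σ : Equiv.Perm V :=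
    Function.Involutive.toPerm (hB.mul (hB.mul x y)) (hB.mul_mul_cancel (hB.mul x y))
  have hσ (j : V) : f (σ j) = f x + f y - f j := by
    change f (hB.mul (hB.mul x y) j) = _
    rw [hB.apply_mul hf, hB.apply_mul hf]
    abel
  refine Finset.card_equiv σ fun j ↦ ?_
  simp only [Finset.mem_filter_univ, hσ]
  grind

theorem card_image_mul_card_fiber (hB : IsSTS B) (hf : ∀ b ∈ B, ∑ j ∈ b, f j = 0) (x : V) :
    #(Finset.univ.image f) * #{j | f j = f x} = Fintype.card V := by
  rw [← Finset.card_univ, Finset.card_eq_sum_card_image f Finset.univ]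
  refine (Finset.sum_const_nat fun c hc ↦ ?_).symm
  obtain ⟨y, -, rfl⟩ := Finset.mem_image.mp hc
  exact hB.card_fiber_eq hf y x

theorem card_image_dvd_card (hB : IsSTS B) (hf : ∀ b ∈ B, ∑ j ∈ b, f j = 0) :
    #(Finset.univ.image f) ∣ Fintype.card V := by
  obtain _ | ⟨⟨x⟩⟩ := isEmpty_or_nonempty V
  · simp
  · exact ⟨_, (hB.card_image_mul_card_fiber hf x).symm⟩

theorem card_fiber_eq_card_div_card_image (hB : IsSTS B) (hf : ∀ b ∈ B, ∑ j ∈ b, f j = 0) {c : W}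
    (hc : c ∈ Finset.univ.image f) : #{j | f j = c} = Fintype.card V / #(Finset.univ.image f) := by
  obtain ⟨x, -, rfl⟩ := Finset.mem_image.mp hc
  exact Nat.eq_div_of_mul_eq_right (Finset.card_pos.mpr ⟨_, hc⟩).ne'
    (hB.card_image_mul_card_fiber hf x)

end ZeroSumLabelling

end IsSTS

theorem coe_affineSpan_eq_of_neg_sub_mem {W : Type*} [AddCommGroup W] [Module (ZMod 3) W]
    {s : Set W} (hs : ∀ x ∈ s, ∀ y ∈ s, -x - y ∈ s) : (affineSpan (ZMod 3) s : Set W) = s := by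
  have hmem {x y z : W} (hx : x ∈ s) (hy : y ∈ s) (hz : z ∈ s) : x - y + z ∈ s := by
    convert hs _ (hs x hx z hz) y hy using 1
    abel
  let A : AffineSubspace (ZMod 3) W :=
    { carrier := s
      smul_vsub_vadd_mem' := fun c x y z hx hy hz ↦ by
        obtain rfl | rfl | rfl : c = 0 ∨ c = 1 ∨ c = -1 := by decide +revert
        · simpa using hz
        · simpa using hmem hx hy hz
        · simpa using hmem hy hx hz }
  exact congrArg _ (AffineSubspace.affineSpan_coe A)

theorem ncard_fiber_dual {K E : Type*} [Field K] [AddCommGroup E] [Module K E]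
    [Module.Finite K E] {φ : Dual K E} (hφ : φ ≠ 0) (c : K) {n : ℕ} (hn : finrank K E = n + 1) :
    {w | φ w = c}.ncard = Nat.card K ^ n := by
  have hker : finrank K φ.ker = n := by
    have hadd := Dual.finrank_ker_add_one_of_ne_zero hφ
    omega
  rw [← hker, ← natCard_eq_pow_finrank]
  exact Nat.card_congr (φ.toAddMonoidHom.fiberEquivKerOfSurjective (φ.surjective hφ) c)

theorem ncard_range_eq_of_ker_eq {α β γ : Type*} {f : α → β} {g : α → γ}
    (h : Setoid.ker f = Setoid.ker g) : (Set.range f).ncard = (Set.range g).ncard :=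
  Nat.card_congr ((Setoid.quotientKerEquivRange f).symm.trans
    ((Quotient.congrRight fun _ _ ↦ by rw [h]).trans (Setoid.quotientKerEquivRange g)))

section Evaluation

variable {V R : Type*} [CommSemiring R]

/-- Evaluation at the point `j`, as a linear functional on a space `D` of functions. For
the row space `D` of a matrix it is a coordinate-free form of the `j`-th column. -/
def evalDual (D : Submodule R (V → R)) (j : V) : Dual R D :=
  (LinearMap.proj j).domRestrict D

@[simp]
theorem evalDual_apply (D : Submodule R (V → R)) (j : V) (g : D) :
    evalDual D j g = (g : V → R) j :=
  rfl

theorem evalDual_span_eq_iff {S : Set (V → R)} {j k : V} :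
    evalDual (Submodule.span R S) j = evalDual (Submodule.span R S) k ↔ ∀ g ∈ S, g j = g k := by
  simp [Submodule.linearMap_eq_iff_of_eq_span _ _ rfl]

theorem sum_evalDual_span_eq_zero_iff {S : Set (V → R)} {b : Finset V} :
    ∑ j ∈ b, evalDual (Submodule.span R S) j = 0 ↔ ∀ g ∈ S, ∑ j ∈ b, g j = 0 := by
  simp [Submodule.linearMap_eq_iff_of_eq_span _ _ rfl]

variable {K : Type*} [Field K]

theorem exists_eq_sum_smul_evalDual [Fintype V] {D : Submodule K (V → K)} (φ : Dual K D) :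
    ∃ c : V → K, φ = ∑ j, c j • evalDual D j := by
  classical
  obtain ⟨ψ, rfl⟩ := φ.exists_extend
  refine ⟨fun j ↦ ψ fun k ↦ if j = k then 1 else 0, LinearMap.ext fun g ↦ ?_⟩
  simp [LinearMap.pi_apply_eq_sum_univ ψ g, mul_comm]

theorem mem_affineSpan_range_evalDual [Finite V] {D : Submodule K (V → K)} (h1 : 1 ∈ D)
    {φ : Dual K D} (hφ : φ ⟨1, h1⟩ = 1) : φ ∈ affineSpan K (Set.range (evalDual D)) := by
  cases nonempty_fintype V
  obtain ⟨c, rfl⟩ := exists_eq_sum_smul_evalDual φ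
  have hc : ∑ j, c j = 1 := by simpa using hφ
  rw [← Finset.univ.affineCombination_eq_linear_combination (evalDual D) c hc]
  exact affineCombination_mem_affineSpan hc _

end Evaluation

namespace IsSTS

variable {V : Type*} [DecidableEq V] {B : Finset (Finset V)}

theorem range_evalDual [Finite V] (hB : IsSTS B) {D : Submodule (ZMod 3) (V → ZMod 3)}
    (h1 : 1 ∈ D) (hD : ∀ b ∈ B, ∑ j ∈ b, evalDual D j = 0) :
    Set.range (evalDual D) = {φ | φ ⟨1, h1⟩ = 1} := by
  refine Set.Subset.antisymm (Set.range_subset_iff.mpr fun _ ↦ rfl) fun φ hφ ↦ ?_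
  have haffine := coe_affineSpan_eq_of_neg_sub_mem (s := Set.range (evalDual D)) (by
    rintro _ ⟨x, rfl⟩ _ ⟨y, rfl⟩
    exact ⟨hB.mul x y, hB.apply_mul hD x y⟩)
  rw [← haffine]
  exact mem_affineSpan_range_evalDual h1 hφ

theorem ncard_range_evalDual [Finite V] (hB : IsSTS B) {D : Submodule (ZMod 3) (V → ZMod 3)}
    (h1 : 1 ∈ D) (hD : ∀ b ∈ B, ∑ j ∈ b, evalDual D j = 0) {i : ℕ}
    (hi : finrank (ZMod 3) D = i + 1) :
    (Set.range (evalDual D)).ncard = 3 ^ i := by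
  obtain hV | hV := isEmpty_or_nonempty V
  · rw [finrank_zero_of_subsingleton] at hi
    omega
  have hne : Dual.eval (ZMod 3) D ⟨1, h1⟩ ≠ 0 := by
    rw [Ne, eval_apply_eq_zero_iff, Submodule.mk_eq_zero]
    exact one_ne_zero
  rw [hB.range_evalDual h1 hD]
  simpa using ncard_fiber_dual hne 1 (Subspace.dual_finrank_eq.trans hi)

theorem sum_evalDual_span_insert_one (hB : IsSTS B) {S : Set (V → ZMod 3)}
    (hS : ∀ g ∈ S, ∀ b ∈ B, ∑ j ∈ b, g j = 0) :
    ∀ b ∈ B, ∑ j ∈ b, evalDual (Submodule.span (ZMod 3) (insert 1 S)) j = 0 := by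
  refine fun b hb ↦ sum_evalDual_span_eq_zero_iff.mpr <|
    Set.forall_mem_insert.mpr ⟨?_, (hS · · b hb)⟩
  rw [Pi.one_def, Finset.sum_const, hB.1 b hb, ZModModule.char_nsmul_eq_zero]

end IsSTS

theorem dual_generator_matrix_columns_gf3_general {V ι : Type*} [Fintype V] [DecidableEq V]
    [DecidableEq (ι → ZMod 3)] {B : Finset (Finset V)} (hB : IsSTS B) {M : ι → V → ZMod 3}
    {i : ℕ} (hdim : finrank (ZMod 3) (Submodule.span (ZMod 3) (insert 1 (Set.range M))) = i + 1)
    (horth : ∀ t, ∀ b ∈ B, ∑ j ∈ b, M t j = 0) :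
    3 ^ i ∣ Fintype.card V ∧
    #(Finset.univ.image fun j t ↦ M t j) = 3 ^ i ∧
    ∀ c ∈ Finset.univ.image (fun j t ↦ M t j),
      #{j | (fun t ↦ M t j) = c} = Fintype.card V / 3 ^ i := by
  have hcol : ∀ b ∈ B, ∑ j ∈ b, (fun t ↦ M t j) = 0 := fun b hb ↦ by
    ext t
    simpa using horth t b hb
  have heval := hB.sum_evalDual_span_insert_one (Set.forall_mem_range.mpr horth)
  have hker : Setoid.ker (fun j t ↦ M t j) =
      Setoid.ker (evalDual (Submodule.span (ZMod 3) (insert 1 (Set.range M)))) := by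
    ext j k
    simp only [Setoid.ker_def, evalDual_span_eq_iff, funext_iff, Set.forall_mem_insert,
      Set.forall_mem_range, Pi.one_apply, true_and]
  have hcard : #(Finset.univ.image fun j t ↦ M t j) = 3 ^ i := by
    rw [← Set.ncard_coe_finset, Finset.coe_image, Finset.coe_univ, Set.image_univ,
      ncard_range_eq_of_ker_eq hker]
    exact hB.ncard_range_evalDual (Submodule.subset_span (Set.mem_insert 1 _)) heval hdim
  rw [← hcard]
  exact ⟨hB.card_image_dvd_card hcol, rfl,
    fun _ ↦ hB.card_fiber_eq_card_div_card_image hcol⟩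

/-- If `D ≤ GF(3)^v` contains the all-one vector, is orthogonal to all blocks of an
STS(v) `B`, and has dimension `i+1`, then a generator matrix `M` of `D` whose first
row is the all-one vector has exactly `3^i` distinct columns, each occurring
`v/3^i` times; in particular `3^i ∣ v`. -/
theorem dual_generator_matrix_columns_gf3 (v i : ℕ)
    (B : Finset (Finset (Fin v))) (hB : IsSTS B)
    (M : Fin (i + 1) → Fin v → ZMod 3)
    (hindep : LinearIndependent (ZMod 3) M)
    (hfirst : ∀ j, M 0 j = 1)
    (horth : ∀ t : Fin (i + 1), ∀ b ∈ B, ∑ j ∈ b, M t j = 0) :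
    3 ^ i ∣ v ∧
    (Finset.univ.image (fun j : Fin v => fun t => M t j)).card = 3 ^ i ∧
    ∀ c ∈ Finset.univ.image (fun j : Fin v => fun t => M t j),
      (Finset.univ.filter (fun j : Fin v => (fun t => M t j) = c)).card = v / 3 ^ i := by
  have hone : 1 ∈ Set.range M := ⟨0, funext hfirst⟩
  simpa only [Fintype.card_fin] using dual_generator_matrix_columns_gf3_general hB
    (by rw [Set.insert_eq_of_mem hone, finrank_span_eq_card hindep, Fintype.card_fin]) horth
end
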